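/- For every τ in the upper half-plane H and every w ∈ ℂ, the following identity holds: θ₂(w, −1/τ) · θ₁(0, τ) = e^{πiτw²} · θ₂(0, −1/τ) · θ₁(τw, τ). (Equivalently, where the denominators are nonzero, θ₂(w,−1/τ)/θ₂(0,−1/τ) = e^{πiτw²} · θ₁(τw,τ)/θ₁(0,τ).) -/

import Mathlib

/-!
Both theta functions are, up to elementary factors, values of Mathlib's `jacobiTheta₂`, so the
identity is the modular transformation of `jacobiTheta₂` under `τ ↦ -1/τ`. The bridge between the
products and the series is the Jacobi triple product
`∏ (1 - q^j)(1 + e^{2πiu} q^{j-1/2})(1 + e^{-2πiu} q^{j-1/2}) = ∑_k q^{k²/2} e^{2πiuk}`.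

The triple product is obtained from its finite form: with nome `x = q^{1/2}`,
`∏_{j<n} (1 + z x^{2j+1})(1 + z⁻¹ x^{2j+1})` is a Laurent polynomial in `z` whose coefficients are
Gaussian binomial coefficients times `x^{k²}` (`hasSum_finite_triple`, by induction on `n`). As
`n → ∞` each Gaussian binomial tends to `1 / (q; q)_∞`, and they are uniformly bounded, so dominated
convergence for series gives the infinite form (`triple_product`, `jacobiTheta₂_eq_prod`).

Consequently `θ₂(v, τ) = ϑ(v + 1/2, τ)` and `θ₁(v, τ) = q^{1/8} e^{πiv} ϑ(v + τ/2, τ)` with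
`ϑ = jacobiTheta₂`. Applying the functional equation to `ϑ(τw + τ/2, τ)` and `ϑ(τ/2, τ)` produces
the same automorphy factor on both sides, and the remaining exponentials agree.
-/

noncomputable section

/-- `qpow τ x = e^{2πiτx}`, so that `qpow τ j = q^j` with `q = e^{2πiτ}`. -/
def qpow (τ x : ℂ) : ℂ := Complex.exp (2 * (Real.pi : ℂ) * Complex.I * τ * x)

/-- Jacobi theta function
`θ(v,τ) = 2 q^{1/8} sin(πv) ∏_{j=1}^∞ (1−q^j)(1−e^{2πiv}q^j)(1−e^{−2πiv}q^j)`. -/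
def jTheta (v τ : ℂ) : ℂ :=
  2 * qpow τ (1/8) * Complex.sin ((Real.pi : ℂ) * v) *
    ∏' j : ℕ, ((1 - qpow τ ((j : ℂ) + 1)) *
      (1 - Complex.exp (2 * (Real.pi : ℂ) * Complex.I * v) * qpow τ ((j : ℂ) + 1)) *
      (1 - Complex.exp (-(2 * (Real.pi : ℂ) * Complex.I * v)) * qpow τ ((j : ℂ) + 1)))

/-- Jacobi theta function
`θ₁(v,τ) = 2 q^{1/8} cos(πv) ∏_{j=1}^∞ (1−q^j)(1+e^{2πiv}q^j)(1+e^{−2πiv}q^j)`. -/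
def jTheta1 (v τ : ℂ) : ℂ :=
  2 * qpow τ (1/8) * Complex.cos ((Real.pi : ℂ) * v) *
    ∏' j : ℕ, ((1 - qpow τ ((j : ℂ) + 1)) *
      (1 + Complex.exp (2 * (Real.pi : ℂ) * Complex.I * v) * qpow τ ((j : ℂ) + 1)) *
      (1 + Complex.exp (-(2 * (Real.pi : ℂ) * Complex.I * v)) * qpow τ ((j : ℂ) + 1)))

/-- Jacobi theta function
`θ₂(v,τ) = ∏_{j=1}^∞ (1−q^j)(1−e^{2πiv}q^{j−1/2})(1−e^{−2πiv}q^{j−1/2})`. -/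
def jTheta2 (v τ : ℂ) : ℂ :=
  ∏' j : ℕ, ((1 - qpow τ ((j : ℂ) + 1)) *
    (1 - Complex.exp (2 * (Real.pi : ℂ) * Complex.I * v) * qpow τ ((j : ℂ) + 1/2)) *
    (1 - Complex.exp (-(2 * (Real.pi : ℂ) * Complex.I * v)) * qpow τ ((j : ℂ) + 1/2)))

/-- Jacobi theta function
`θ₃(v,τ) = ∏_{j=1}^∞ (1−q^j)(1+e^{2πiv}q^{j−1/2})(1+e^{−2πiv}q^{j−1/2})`. -/
def jTheta3 (v τ : ℂ) : ℂ :=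
  ∏' j : ℕ, ((1 - qpow τ ((j : ℂ) + 1)) *
    (1 + Complex.exp (2 * (Real.pi : ℂ) * Complex.I * v) * qpow τ ((j : ℂ) + 1/2)) *
    (1 + Complex.exp (-(2 * (Real.pi : ℂ) * Complex.I * v)) * qpow τ ((j : ℂ) + 1/2)))

/-- `θ'(0,τ) = ∂θ(v,τ)/∂v |_{v=0}`. -/
def jThetaDeriv (τ : ℂ) : ℂ := deriv (fun v => jTheta v τ) 0

end

/-! ### The finite triple product -/

/-- The `q`-Pochhammer symbol `(q; q)_n = ∏_{i=1}^n (1 - q^i)` at `q = x²`. -/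
noncomputable def qFac (x : ℂ) (n : ℕ) : ℂ := ∏ i ∈ Finset.range n, (1 - x ^ (2 * (i + 1)))

/-- `1 / (q; q)_m` at `q = x²` for an integer `m`, with the usual convention that it vanishes for
`m < 0`. -/
noncomputable def qFacInv (x : ℂ) (m : ℤ) : ℂ := if 0 ≤ m then (qFac x m.toNat)⁻¹ else 0

section FiniteTripleProduct

variable {x : ℂ}

lemma one_sub_pow_ne_zero (hx : ‖x‖ < 1) (i : ℕ) : 1 - x ^ (2 * (i + 1)) ≠ 0 := by
  intro h
  have h1 : ‖x ^ (2 * (i + 1))‖ < 1 := by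
    rw [norm_pow]; exact pow_lt_one₀ (norm_nonneg _) hx (by omega)
  rw [← sub_eq_zero.mp h] at h1
  simp at h1

lemma qFac_ne_zero (hx : ‖x‖ < 1) (n : ℕ) : qFac x n ≠ 0 :=
  Finset.prod_ne_zero_iff.mpr fun i _ => one_sub_pow_ne_zero hx i

/-- The step relation for `1 / (q; q)_m`, valid for every integer `m`: at `m = 0` both sides vanish,
because of the factor `1 - q^0`. -/
lemma qFacInv_sub_one (hx : ‖x‖ < 1) (m : ℤ) :
    qFacInv x (m - 1) = (1 - x ^ (2 * m)) * qFacInv x m := by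
  rcases lt_trichotomy m 0 with h | rfl | h
  · simp [qFacInv, show ¬ 0 ≤ m by omega, show ¬ 1 ≤ m by omega]
  · simp [qFacInv]
  · obtain ⟨n, rfl⟩ : ∃ n : ℕ, m = n + 1 := ⟨(m - 1).toNat, by omega⟩
    have e : ((n : ℤ) + 1).toNat = n + 1 := by omega
    have h1 := one_sub_pow_ne_zero hx n
    have h2 := qFac_ne_zero hx n
    have e2 : x ^ (2 * ((n : ℤ) + 1)) = x ^ (2 * (n + 1)) := by
      rw [← zpow_natCast]; push_cast; rfl
    have e3 : qFac x (n + 1) = qFac x n * (1 - x ^ (2 * (n + 1))) := Finset.prod_range_succ _ _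
    rw [e2]
    simp only [qFacInv, add_sub_cancel_right, e, e3, show (0 : ℤ) ≤ n by omega,
      show (0 : ℤ) ≤ n + 1 by omega, if_true, Int.toNat_natCast]
    field_simp

/-- The coefficient of `z^k` in `∏_{j<n} (1 + z x^{2j+1}) (1 + z⁻¹ x^{2j+1})`: a Gaussian binomial
coefficient `[2n, n+k]` at `q = x²`, times `x^{k²}`. -/
noncomputable def tripleCoeff (x : ℂ) (n : ℕ) (k : ℤ) : ℂ :=
  x ^ (k ^ 2) * qFacInv x (n - k) * qFacInv x (n + k) * qFac x (2 * n)

lemma tripleCoeff_succ (hx : ‖x‖ < 1) (h0 : x ≠ 0) (n : ℕ) (k : ℤ) :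
    tripleCoeff x (n + 1) k = (1 + x ^ (4 * n + 2)) * tripleCoeff x n k +
      x ^ (2 * n + 1) * (tripleCoeff x n (k - 1) + tripleCoeff x n (k + 1)) := by
  have hF : qFac x (2 * (n + 1)) =
      qFac x (2 * n) * (1 - x ^ (2 * (2 * n + 1))) * (1 - x ^ (2 * (2 * n + 1 + 1))) := by
    rw [show 2 * (n + 1) = 2 * n + 1 + 1 by ring]
    simp only [qFac, Finset.prod_range_succ]
  set A := qFacInv x (n + 1 - k) with hA
  set B := qFacInv x (n + 1 + k) with hB
  have a1 : qFacInv x (n - k) = (1 - x ^ (2 * ((n : ℤ) + 1 - k))) * A := by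
    rw [hA, ← qFacInv_sub_one hx]; congr 1; ring
  have b1 : qFacInv x (n + k) = (1 - x ^ (2 * ((n : ℤ) + 1 + k))) * B := by
    rw [hB, ← qFacInv_sub_one hx]; congr 1; ring
  have a2 : qFacInv x (n - (k + 1)) = (1 - x ^ (2 * ((n : ℤ) - k))) * qFacInv x (n - k) := by
    rw [← qFacInv_sub_one hx]; congr 1; ring
  have b2 : qFacInv x (n + (k - 1)) = (1 - x ^ (2 * ((n : ℤ) + k))) * qFacInv x (n + k) := by
    rw [← qFacInv_sub_one hx]; congr 1; ring
  have a3 : qFacInv x (n - (k - 1)) = A := by rw [hA]; congr 1; ring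
  have b3 : qFacInv x (n + (k + 1)) = B := by rw [hB]; congr 1; ring
  have hY : x ^ k ≠ 0 := zpow_ne_zero _ h0
  have s1 : x ^ ((k - 1) ^ 2) = x ^ (k ^ 2) * x / (x ^ k) ^ 2 := by
    rw [show (k - 1) ^ 2 = k ^ 2 + 1 - k * 2 by ring, zpow_sub₀ h0, zpow_add₀ h0, zpow_one,
      zpow_mul]; rfl
  have s2 : x ^ ((k + 1) ^ 2) = x ^ (k ^ 2) * x * (x ^ k) ^ 2 := by
    rw [show (k + 1) ^ 2 = k ^ 2 + 1 + k * 2 by ring, zpow_add₀ h0, zpow_add₀ h0, zpow_one,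
      zpow_mul]; rfl
  have t1 : x ^ (2 * ((n : ℤ) + 1 - k)) = (x ^ n) ^ 2 * x ^ 2 / (x ^ k) ^ 2 := by
    rw [show 2 * ((n : ℤ) + 1 - k) = n * 2 + 2 - k * 2 by ring, zpow_sub₀ h0, zpow_add₀ h0,
      zpow_mul, zpow_mul, zpow_natCast]; rfl
  have t2 : x ^ (2 * ((n : ℤ) + 1 + k)) = (x ^ n) ^ 2 * x ^ 2 * (x ^ k) ^ 2 := by
    rw [show 2 * ((n : ℤ) + 1 + k) = n * 2 + 2 + k * 2 by ring, zpow_add₀ h0, zpow_add₀ h0,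
      zpow_mul, zpow_mul, zpow_natCast]; rfl
  have t3 : x ^ (2 * ((n : ℤ) - k)) = (x ^ n) ^ 2 / (x ^ k) ^ 2 := by
    rw [show 2 * ((n : ℤ) - k) = n * 2 - k * 2 by ring, zpow_sub₀ h0,
      zpow_mul, zpow_mul, zpow_natCast]; rfl
  have t4 : x ^ (2 * ((n : ℤ) + k)) = (x ^ n) ^ 2 * (x ^ k) ^ 2 := by
    rw [show 2 * ((n : ℤ) + k) = n * 2 + k * 2 by ring, zpow_add₀ h0,
      zpow_mul, zpow_mul, zpow_natCast]; rfl
  have p1 : x ^ (2 * (2 * n + 1)) = (x ^ n) ^ 4 * x ^ 2 := by ring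
  have p2 : x ^ (2 * (2 * n + 1 + 1)) = (x ^ n) ^ 4 * x ^ 4 := by ring
  have p3 : x ^ (4 * n + 2) = (x ^ n) ^ 4 * x ^ 2 := by ring
  have p4 : x ^ (2 * n + 1) = (x ^ n) ^ 2 * x := by ring
  simp only [tripleCoeff]
  push_cast
  rw [← hA, ← hB, hF, a2, b2, a3, b3, a1, b1, s1, s2, t1, t2, t3, t4, p1, p2, p3, p4]
  generalize x ^ k = Y at *
  generalize x ^ n = X
  generalize x ^ (k ^ 2) = W
  field_simp
  ring

/-- The finite form of the Jacobi triple product. The sum has finite support, but writing it over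
all of `ℤ` makes the induction a pair of index shifts. -/
lemma hasSum_finite_triple (hx : ‖x‖ < 1) (h0 : x ≠ 0) {z : ℂ} (hz : z ≠ 0) (n : ℕ) :
    HasSum (fun k : ℤ => tripleCoeff x n k * z ^ k)
      (∏ j ∈ Finset.range n, ((1 + z * x ^ (2 * j + 1)) * (1 + z⁻¹ * x ^ (2 * j + 1)))) := by
  induction n with
  | zero =>
    have h : ∀ k : ℤ, k ≠ 0 → tripleCoeff x 0 k * z ^ k = 0 := by
      intro k hk
      rcases lt_or_gt_of_ne hk with h | h
      · simp [tripleCoeff, qFacInv, show ¬ 0 ≤ k by omega]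
      · simp [tripleCoeff, qFacInv, show ¬ k ≤ 0 by omega]
    convert hasSum_single (0 : ℤ) h using 1
    simp [tripleCoeff, qFacInv, qFac]
  | succ n ih =>
    have hm := ((Equiv.subRight (1 : ℤ)).hasSum_iff.mpr ih).mul_left (x ^ (2 * n + 1) * z)
    have hp := ((Equiv.addRight (1 : ℤ)).hasSum_iff.mpr ih).mul_left (x ^ (2 * n + 1) * z⁻¹)
    have h := ((ih.mul_left (1 + x ^ (4 * n + 2))).add hm).add hp
    rw [Finset.prod_range_succ]
    generalize (∏ j ∈ Finset.range n, ((1 + z * x ^ (2 * j + 1)) * (1 + z⁻¹ * x ^ (2 * j + 1)))) = P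
      at h
    have hval : P * ((1 + z * x ^ (2 * n + 1)) * (1 + z⁻¹ * x ^ (2 * n + 1))) =
        (1 + x ^ (4 * n + 2)) * P + x ^ (2 * n + 1) * z * P + x ^ (2 * n + 1) * z⁻¹ * P := by
      field_simp
      ring
    rw [hval]
    have hfun : (fun k : ℤ => tripleCoeff x (n + 1) k * z ^ k) = fun k : ℤ =>
        (1 + x ^ (4 * n + 2)) * (tripleCoeff x n k * z ^ k) +
          x ^ (2 * n + 1) * z * (tripleCoeff x n (k - 1) * z ^ (k - 1)) +
          x ^ (2 * n + 1) * z⁻¹ * (tripleCoeff x n (k + 1) * z ^ (k + 1)) := by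
      funext k
      rw [tripleCoeff_succ hx h0, zpow_sub_one₀ hz, zpow_add_one₀ hz]
      field_simp
      ring
    rw [hfun]
    exact h

end FiniteTripleProduct

/-! ### The infinite triple product -/

section TripleProduct

open Filter Topology

variable {x : ℂ}

lemma summable_norm_factor (hx : ‖x‖ < 1) (c : ℂ) (m : ℕ) :
    Summable fun j : ℕ => ‖c * x ^ (2 * j + m)‖ := by
  have h : Summable fun j : ℕ => ‖c‖ * ‖x‖ ^ m * (‖x‖ ^ 2) ^ j :=
    (summable_geometric_of_lt_one (by positivity)
      (pow_lt_one₀ (norm_nonneg _) hx two_ne_zero)).mul_left _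
  refine h.congr fun j => ?_
  rw [norm_mul, norm_pow]; ring

lemma multipliable_factor (hx : ‖x‖ < 1) (c : ℂ) (m : ℕ) :
    Multipliable fun j : ℕ => 1 + c * x ^ (2 * j + m) :=
  multipliable_one_add_of_summable (summable_norm_factor hx c m)

lemma tprod_even_split (hx : ‖x‖ < 1) (c : ℂ) :
    ∏' j : ℕ, (1 + c * x ^ (2 * j)) = (1 + c) * ∏' j : ℕ, (1 + c * x ^ (2 * j + 2)) := by
  have h := tprod_eq_zero_mul' (f := fun i : ℕ => 1 + c * x ^ (2 * i))
    (by simpa only [mul_add_one] using multipliable_factor hx c 2)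
  simpa only [mul_add_one, mul_zero, pow_zero, mul_one] using h

lemma multipliable_qFac (hx : ‖x‖ < 1) : Multipliable fun j : ℕ => 1 - x ^ (2 * (j + 1)) := by
  refine (multipliable_factor hx (-1) 2).congr fun j => ?_
  ring

lemma tprod_qFac_ne_zero (hx : ‖x‖ < 1) : ∏' j : ℕ, (1 - x ^ (2 * (j + 1))) ≠ 0 := by
  have h := tprod_one_add_ne_zero_of_summable (f := fun j : ℕ => (-1) * x ^ (2 * j + 2))
    (fun j => by
      have := one_sub_pow_ne_zero hx j
      rwa [show 1 + (-1) * x ^ (2 * j + 2) = 1 - x ^ (2 * (j + 1)) by ring])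
    (summable_norm_factor hx (-1) 2)
  convert h using 4 with j
  ring

/-- The Jacobi triple product with nome `x`, as the limit of its finite form. -/
lemma triple_product (hx : ‖x‖ < 1) (h0 : x ≠ 0) {z : ℂ} (hz : z ≠ 0)
    (hs : Summable fun k : ℤ => x ^ (k ^ 2) * z ^ k) :
    (∏' j : ℕ, (1 - x ^ (2 * (j + 1)))) * ((∏' j : ℕ, (1 + z * x ^ (2 * j + 1))) *
      ∏' j : ℕ, (1 + z⁻¹ * x ^ (2 * j + 1))) = ∑' k : ℤ, x ^ (k ^ 2) * z ^ k := by
  set Q := ∏' j : ℕ, (1 - x ^ (2 * (j + 1))) with hQ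
  have hQ0 : Q ≠ 0 := tprod_qFac_ne_zero hx
  have hF : Tendsto (qFac x) atTop (𝓝 Q) := (multipliable_qFac hx).hasProd.tendsto_prod_nat
  have hFi : Tendsto (fun n => (qFac x n)⁻¹) atTop (𝓝 Q⁻¹) := hF.inv₀ hQ0
  obtain ⟨M, hM⟩ := hF.norm.bddAbove_range
  obtain ⟨N, hN⟩ := hFi.norm.bddAbove_range
  replace hM : ∀ n, ‖qFac x n‖ ≤ M := fun n => hM ⟨n, rfl⟩
  replace hN : ∀ n, ‖(qFac x n)⁻¹‖ ≤ N := fun n => hN ⟨n, rfl⟩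
  have hN0 : 0 ≤ N := (norm_nonneg _).trans (hN 0)
  have hNr : ∀ m, ‖qFacInv x m‖ ≤ N := by
    intro m
    unfold qFacInv
    split_ifs
    · exact hN _
    · simpa using hN0
  have hr : Tendsto (qFacInv x) atTop (𝓝 Q⁻¹) := by
    have ht : Tendsto Int.toNat atTop atTop :=
      tendsto_atTop.mpr fun b => (eventually_ge_atTop (b : ℤ)).mono fun m hm => by omega
    refine (hFi.comp ht).congr' ?_
    filter_upwards [eventually_ge_atTop (0 : ℤ)] with m hm
    simp [qFacInv, hm]
  have hcast : Tendsto (fun n : ℕ => (n : ℤ)) atTop atTop := tendsto_natCast_atTop_atTop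
  have hlim : ∀ k : ℤ, Tendsto (fun n => tripleCoeff x n k * z ^ k) atTop
      (𝓝 (Q⁻¹ * (x ^ (k ^ 2) * z ^ k))) := by
    intro k
    have h1 : Tendsto (fun n : ℕ => qFacInv x (n - k)) atTop (𝓝 Q⁻¹) :=
      hr.comp (tendsto_atTop_add_const_right _ (-k) hcast)
    have h2 : Tendsto (fun n : ℕ => qFacInv x (n + k)) atTop (𝓝 Q⁻¹) :=
      hr.comp (tendsto_atTop_add_const_right _ k hcast)
    have h3 : Tendsto (fun n : ℕ => qFac x (2 * n)) atTop (𝓝 Q) :=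
      hF.comp (tendsto_id.const_mul_atTop' two_pos)
    have h := (((h1.const_mul (x ^ (k ^ 2))).mul h2).mul h3).mul_const (z ^ k)
    have hval : x ^ (k ^ 2) * Q⁻¹ * Q⁻¹ * Q * z ^ k = Q⁻¹ * (x ^ (k ^ 2) * z ^ k) := by
      field_simp
    rw [hval] at h
    exact h
  have hbound : ∀ (n : ℕ) (k : ℤ),
      ‖tripleCoeff x n k * z ^ k‖ ≤ N * N * M * ‖x ^ (k ^ 2) * z ^ k‖ := by
    intro n k
    have : tripleCoeff x n k * z ^ k =
      qFacInv x (n - k) * qFacInv x (n + k) * qFac x (2 * n) * (x ^ (k ^ 2) * z ^ k) := by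
      unfold tripleCoeff; ring
    rw [this, norm_mul, norm_mul, norm_mul]
    gcongr
    · exact hNr _
    · exact hNr _
    · exact hM _
  have hT := tendsto_tsum_of_dominated_convergence (hs.norm.mul_left (N * N * M)) hlim
    (Eventually.of_forall fun n k => hbound n k)
  have hP :=
    ((multipliable_factor hx z 1).mul (multipliable_factor hx z⁻¹ 1)).hasProd.tendsto_prod_nat
  rw [(multipliable_factor hx z 1).tprod_mul (multipliable_factor hx z⁻¹ 1)] at hP
  have := tendsto_nhds_unique hP
    (hT.congr fun n => (hasSum_finite_triple hx h0 hz n).tsum_eq)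
  rw [this, tsum_mul_left, mul_inv_cancel_left₀ hQ0]

end TripleProduct

/-! ### Theta functions as values of `jacobiTheta₂` -/

section Theta

open Complex

lemma norm_nome_lt_one {τ : ℂ} (hτ : 0 < τ.im) : ‖exp (Real.pi * I * τ)‖ < 1 := by
  rw [norm_exp]
  have : (Real.pi * I * τ : ℂ).re = -(Real.pi * τ.im) := by simp
  rw [this, Real.exp_lt_one_iff]
  have := mul_pos Real.pi_pos hτ
  linarith

/-- The Jacobi triple product for Mathlib's `jacobiTheta₂`. -/
lemma jacobiTheta₂_eq_prod {τ : ℂ} (hτ : 0 < τ.im) (u : ℂ) :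
    (∏' j : ℕ, (1 - exp (Real.pi * I * τ) ^ (2 * (j + 1)))) *
      ((∏' j : ℕ, (1 + exp (2 * Real.pi * I * u) * exp (Real.pi * I * τ) ^ (2 * j + 1))) *
      ∏' j : ℕ, (1 + (exp (2 * Real.pi * I * u))⁻¹ * exp (Real.pi * I * τ) ^ (2 * j + 1))) =
      jacobiTheta₂ u τ := by
  have hterm : ∀ k : ℤ, jacobiTheta₂_term k u τ =
      exp (Real.pi * I * τ) ^ (k ^ 2) * exp (2 * Real.pi * I * u) ^ k := by
    intro k
    rw [jacobiTheta₂_term, ← exp_int_mul, ← exp_int_mul, ← exp_add]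
    congr 1; push_cast; ring
  have hs := (summable_jacobiTheta₂_term_iff u τ).mpr hτ
  rw [jacobiTheta₂, tsum_congr hterm]
  exact triple_product (norm_nome_lt_one hτ) (exp_ne_zero _) (exp_ne_zero _)
    (hs.congr fun k => hterm k)

lemma qpow_add_one (τ : ℂ) (j : ℕ) :
    qpow τ ((j : ℂ) + 1) = exp (Real.pi * I * τ) ^ (2 * (j + 1)) := by
  rw [qpow, ← exp_nat_mul]; congr 1; push_cast; ring

lemma qpow_add_half (τ : ℂ) (j : ℕ) :
    qpow τ ((j : ℂ) + 1 / 2) = exp (Real.pi * I * τ) ^ (2 * j + 1) := by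
  rw [qpow, ← exp_nat_mul]; congr 1; push_cast; ring

lemma jTheta2_eq {τ : ℂ} (hτ : 0 < τ.im) (v : ℂ) :
    jTheta2 v τ = jacobiTheta₂ (v + 1 / 2) τ := by
  have hx := norm_nome_lt_one hτ
  have e1 : exp (2 * Real.pi * I * (v + 1 / 2)) = -exp (2 * Real.pi * I * v) := by
    rw [show 2 * Real.pi * I * (v + 1 / 2) = 2 * Real.pi * I * v + Real.pi * I by ring, exp_add,
      exp_pi_mul_I]; ring
  rw [← jacobiTheta₂_eq_prod hτ, e1, inv_neg, ← exp_neg, jTheta2,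
    ← (multipliable_factor hx _ 1).tprod_mul (multipliable_factor hx _ 1),
    ← (multipliable_qFac hx).tprod_mul
      ((multipliable_factor hx _ 1).mul (multipliable_factor hx _ 1))]
  refine tprod_congr fun j => ?_
  rw [qpow_add_one, qpow_add_half]
  ring

/-- In the triple product at `u = v + τ/2` the factors `1 + e^{-2πiu} q^{j-1/2}` become
`1 + e^{-2πiv} q^{j-1}`; the one with `j = 1` supplies the cosine in `jTheta1`. -/
lemma jTheta1_eq {τ : ℂ} (hτ : 0 < τ.im) (v : ℂ) :
    jTheta1 v τ = qpow τ (1 / 8) * exp (Real.pi * I * v) * jacobiTheta₂ (v + τ / 2) τ := by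
  have hx := norm_nome_lt_one hτ
  have e1 : exp (2 * Real.pi * I * (v + τ / 2)) =
      exp (2 * Real.pi * I * v) * exp (Real.pi * I * τ) := by
    rw [← exp_add]; congr 1; ring
  have hcos : 2 * cos (Real.pi * v) =
      exp (Real.pi * I * v) * (1 + exp (-(2 * Real.pi * I * v))) := by
    rw [two_cos, mul_add, ← exp_add]; ring_nf
  have hx0 : exp (Real.pi * I * τ) ≠ 0 := exp_ne_zero _
  have hsplit : ∏' j : ℕ, (1 + (exp (2 * Real.pi * I * v) * exp (Real.pi * I * τ))⁻¹ *
      exp (Real.pi * I * τ) ^ (2 * j + 1)) = (1 + exp (-(2 * Real.pi * I * v))) *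
      ∏' j : ℕ, (1 + exp (-(2 * Real.pi * I * v)) * exp (Real.pi * I * τ) ^ (2 * j + 2)) := by
    have h (j : ℕ) : 1 + (exp (2 * Real.pi * I * v) * exp (Real.pi * I * τ))⁻¹ *
        exp (Real.pi * I * τ) ^ (2 * j + 1) =
        1 + exp (-(2 * Real.pi * I * v)) * exp (Real.pi * I * τ) ^ (2 * j) := by
      rw [mul_inv, exp_neg, pow_succ]; field_simp
    rw [tprod_congr h, tprod_even_split hx]
  have hshift : ∏' j : ℕ, (1 + exp (2 * Real.pi * I * v) * exp (Real.pi * I * τ) *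
      exp (Real.pi * I * τ) ^ (2 * j + 1)) =
      ∏' j : ℕ, (1 + exp (2 * Real.pi * I * v) * exp (Real.pi * I * τ) ^ (2 * j + 2)) :=
    tprod_congr fun j => by ring
  have hprod : jTheta1 v τ = 2 * qpow τ (1 / 8) * cos (Real.pi * v) *
      ((∏' j : ℕ, (1 - exp (Real.pi * I * τ) ^ (2 * (j + 1)))) *
      ((∏' j : ℕ, (1 + exp (2 * Real.pi * I * v) * exp (Real.pi * I * τ) ^ (2 * j + 2))) *
      ∏' j : ℕ, (1 + exp (-(2 * Real.pi * I * v)) * exp (Real.pi * I * τ) ^ (2 * j + 2)))) := by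
    rw [jTheta1, ← (multipliable_factor hx _ 2).tprod_mul (multipliable_factor hx _ 2),
      ← (multipliable_qFac hx).tprod_mul
        ((multipliable_factor hx _ 2).mul (multipliable_factor hx _ 2))]
    congr 1
    refine tprod_congr fun j => ?_
    rw [qpow_add_one]
    ring
  rw [hprod, ← jacobiTheta₂_eq_prod hτ, e1, hsplit, hshift]
  linear_combination (qpow τ (1 / 8) * ((∏' j : ℕ, (1 - exp (Real.pi * I * τ) ^ (2 * (j + 1)))) *
      ((∏' j : ℕ, (1 + exp (2 * Real.pi * I * v) * exp (Real.pi * I * τ) ^ (2 * j + 2))) *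
      ∏' j : ℕ, (1 + exp (-(2 * Real.pi * I * v)) * exp (Real.pi * I * τ) ^ (2 * j + 2))))) * hcos

end Theta

theorem theta2_theta1_S_identity (τ : ℂ) (hτ : 0 < τ.im) (w : ℂ) :
    jTheta2 w (-1 / τ) * jTheta1 0 τ =
      Complex.exp ((Real.pi : ℂ) * Complex.I * τ * w ^ 2) * jTheta2 0 (-1 / τ) *
        jTheta1 (τ * w) τ := by
  have hτ0 : τ ≠ 0 := fun h => by simp [h] at hτ
  have hσ : 0 < (-1 / τ).im := by
    rw [neg_div, Complex.neg_im, one_div, Complex.inv_im, neg_div, neg_neg]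
    exact div_pos hτ (Complex.normSq_pos.mpr hτ0)
  rw [jTheta2_eq hσ, jTheta2_eq hσ, jTheta1_eq hτ, jTheta1_eq hτ,
    jacobiTheta₂_functional_equation (0 + τ / 2), jacobiTheta₂_functional_equation (τ * w + τ / 2)]
  have a1 : (0 + τ / 2) / τ = 0 + 1 / 2 := by field_simp; ring
  have a2 : (τ * w + τ / 2) / τ = w + 1 / 2 := by field_simp
  have hexp : Complex.exp (Real.pi * Complex.I * 0) *
      Complex.exp (-Real.pi * Complex.I * (0 + τ / 2) ^ 2 / τ) =
      Complex.exp (Real.pi * Complex.I * τ * w ^ 2) *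
      (Complex.exp (Real.pi * Complex.I * (τ * w)) *
      Complex.exp (-Real.pi * Complex.I * (τ * w + τ / 2) ^ 2 / τ)) := by
    simp only [← Complex.exp_add]
    congr 1
    field_simp
    ring
  rw [a1, a2]
  -- Both sides carry the factor `(-iτ)^{-1/2}`, so only the exponentials have to be compared.
  linear_combination (jacobiTheta₂ (w + 1 / 2) (-1 / τ) * qpow τ (1 / 8) *
    (1 / (-Complex.I * τ) ^ (1 / 2 : ℂ)) * jacobiTheta₂ (0 + 1 / 2) (-1 / τ)) * hexp
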